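/- Let ψ = (a₁,a₂,a₃,b₁,b₂,b₃) be a real vector such that the matrix V = 𝒱(ψ) satisfies V_{ij} > 0 whenever i ∉ {j−1, j} (indices mod 7). If α₁(2) + β₁(2) ≤ α₂(2) + β₂(2), then α₂(6) + β₂(6) < α₃(6) + β₃(6). -/

import Mathlib

/-- The rows of the 7-by-3 matrix `W(a₁,a₂,a₃,b₁,b₂,b₃)`, indexed by `ZMod 7`
(index `k` representing the `k`-th row, with `7 ≡ 0`): `Wrow ... k` is the
`k`-th column of the 3-by-7 matrix with rows `(0,0,1,1,a₁,a₂,a₃)`,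
`(1,0,0,1,1,1,1)`, `(1,1,0,0,b₁,b₂,b₃)`. -/
noncomputable def Wrow (a₁ a₂ a₃ b₁ b₂ b₃ : ℝ) (k : ZMod 7) : Fin 3 → ℝ :=
  fun r =>
    (Matrix.of ![![(0 : ℝ), 0, 1, 1, a₁, a₂, a₃],
                 ![1, 0, 0, 1, 1, 1, 1],
                 ![1, 1, 0, 0, b₁, b₂, b₃]]) r ⟨(k - 1).val, ZMod.val_lt _⟩

/-- The 7-by-7 matrix `𝒱(a₁,a₂,a₃,b₁,b₂,b₃)`, indexed by `ZMod 7`: its `(i,j)` entry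
is the determinant of the 3-by-3 matrix with rows `W_{i-1}`, `W_{j-2}`, `W_{j-1}`. -/
noncomputable def Vmat (a₁ a₂ a₃ b₁ b₂ b₃ : ℝ) : Matrix (ZMod 7) (ZMod 7) ℝ :=
  Matrix.of fun i j =>
    Matrix.det (Matrix.of ![Wrow a₁ a₂ a₃ b₁ b₂ b₃ (i - 1),
                            Wrow a₁ a₂ a₃ b₁ b₂ b₃ (j - 2),
                            Wrow a₁ a₂ a₃ b₁ b₂ b₃ (j - 1)])

/-- The six sequences `α₁(t),α₂(t),α₃(t),β₁(t),β₂(t),β₃(t)` of Notation 4, packaged as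
`seqV a₁ a₂ a₃ b₁ b₂ b₃ t = ((α₁(t), α₂(t), α₃(t)), (β₁(t), β₂(t), β₃(t)))`, with
initial value `((a₁,a₂,a₃),(b₁,b₂,b₃))` and the recursions
`α₁(t+1) = (1 - α₃(t) - β₃(t))/(1 - β₃(t))`,
`α_{χ+1}(t+1) = (α_χ(t) - α_χ(t)β₃(t) - α₃(t) + α₃(t)β_χ(t))/(α_χ(t) - α_χ(t)β₃(t))`
for `χ ∈ {1,2}`, `β₁(t+1) = α₃(t)`, `β₂(t+1) = α₃(t)/α₁(t)`, `β₃(t+1) = α₃(t)/α₂(t)`. -/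
noncomputable def seqV (a₁ a₂ a₃ b₁ b₂ b₃ : ℝ) : ℕ → (ℝ × ℝ × ℝ) × (ℝ × ℝ × ℝ)
  | 0 => ((a₁, a₂, a₃), (b₁, b₂, b₃))
  | t + 1 =>
      let s := seqV a₁ a₂ a₃ b₁ b₂ b₃ t
      let α₁ := s.1.1
      let α₂ := s.1.2.1
      let α₃ := s.1.2.2
      let β₁ := s.2.1
      let β₂ := s.2.2.1
      let β₃ := s.2.2.2
      (((1 - α₃ - β₃) / (1 - β₃),
        (α₁ - α₁ * β₃ - α₃ + α₃ * β₁) / (α₁ - α₁ * β₃),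
        (α₂ - α₂ * β₃ - α₃ + α₃ * β₂) / (α₂ - α₂ * β₃)),
       (α₃, α₃ / α₁, α₃ / α₂))

/-- `alphaV χ t` is `α_χ(t)` (for `χ ∈ {1,2,3}`, 1-indexed via `Fin 3`). -/
noncomputable def alphaV (a₁ a₂ a₃ b₁ b₂ b₃ : ℝ) (χ : Fin 3) (t : ℕ) : ℝ :=
  ![(seqV a₁ a₂ a₃ b₁ b₂ b₃ t).1.1,
    (seqV a₁ a₂ a₃ b₁ b₂ b₃ t).1.2.1,
    (seqV a₁ a₂ a₃ b₁ b₂ b₃ t).1.2.2] χ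

/-- `betaV χ t` is `β_χ(t)` (for `χ ∈ {1,2,3}`, 1-indexed via `Fin 3`). -/
noncomputable def betaV (a₁ a₂ a₃ b₁ b₂ b₃ : ℝ) (χ : Fin 3) (t : ℕ) : ℝ :=
  ![(seqV a₁ a₂ a₃ b₁ b₂ b₃ t).2.1,
    (seqV a₁ a₂ a₃ b₁ b₂ b₃ t).2.2.1,
    (seqV a₁ a₂ a₃ b₁ b₂ b₃ t).2.2.2] χ

/-!
Regard the rows of `W` as seven points `w k` of the projective plane. At time `t`, `(α_χ, β_χ)` are
the coordinates of the point `w (χ + 4 - t)` in the projective frame formed by the four points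
`w (1 - t), …, w (4 - t)`, and the recursion merely shifts this frame by one index.

In a frame `A, B, C, D`, the function `1 - α - β` vanishes on the line `AD`, with `BC` as the line
at infinity. Hence comparing `α + β` at `p` and `q` amounts to deciding on which side of the line
`AD` the lines `BC` and `pq` meet. At times `2` and `6` the same point `Y`, the intersection of the
lines through `w 0, w 1` and `w 3, w 4`, is compared with the lines joining `w 2` to `w 6` and to
`w 5`. A three-term Plücker relation in the pencil through `w 2` shows that if `Y` lies on the
positive side of the first line, or on it, then it lies strictly on the positive side of the second.
-/

section Bracket

open scoped Matrix

variable {R : Type*} [CommRing R]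

/-- The bracket `[u v w]` of projective geometry: the determinant with rows `u`, `v`, `w`. -/
def bracket (u v w : Fin 3 → R) : R :=
  Matrix.det (Matrix.of ![u, v, w])

lemma bracket_eq (u v w : Fin 3 → R) :
    bracket u v w = u 0 * (v 1 * w 2 - v 2 * w 1) - u 1 * (v 0 * w 2 - v 2 * w 0)
      + u 2 * (v 0 * w 1 - v 1 * w 0) := by
  simp only [bracket, Matrix.det_fin_three, Matrix.of_apply, Matrix.cons_val]
  ring

lemma bracket_rotate (u v w : Fin 3 → R) : bracket u v w = bracket v w u := by
  simp only [bracket_eq]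
  ring

/-- The intersection of the lines `ab` and `cd`, as a vector of homogeneous coordinates. It is `0`
unless these are two distinct lines. -/
def lineMeet (a b c d : Fin 3 → R) : Fin 3 → R :=
  (a ⨯₃ b) ⨯₃ (c ⨯₃ d)

lemma bracket_lineMeet (a b c d u v : Fin 3 → R) :
    bracket (lineMeet a b c d) u v =
      bracket a c d * bracket b u v - bracket b c d * bracket a u v := by
  simp only [lineMeet, bracket_eq, cross_apply, Matrix.cons_val]
  ring

lemma bracket_lineMeet_swap (a b c d u v : Fin 3 → R) :
    bracket (lineMeet c d a b) u v = bracket (lineMeet a b c d) v u := by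
  simp only [lineMeet, bracket_eq, cross_apply, Matrix.cons_val]
  ring

lemma bracket_plucker (y a b c d : Fin 3 → R) :
    bracket y a c * bracket b d c =
      bracket a d c * bracket y b c - bracket c a b * bracket y d c := by
  simp only [bracket_eq]
  ring

end Bracket

section Frame

variable {K : Type*} [Field K] {A B C D p P q : Fin 3 → K}

/-- The coordinate `α` of `p` in the projective frame `A, B, C, D`: it is `a` when
`A = (0,1,1)`, `B = (0,0,1)`, `C = (1,0,0)`, `D = (1,1,0)` and `p = (a,1,b)`, and is invariant under
projective transformations. -/
def frameAlpha (A B C D p : Fin 3 → K) : K :=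
  bracket p A B * bracket D B C / (bracket p B C * bracket D A B)

/-- The coordinate `β` of `p` in the projective frame `A, B, C, D`, normalized to be `b` in the
situation described at `frameAlpha`. -/
def frameBeta (A B C D p : Fin 3 → K) : K :=
  bracket p C D * bracket A B C / (bracket p B C * bracket A C D)

lemma frameAlpha_standard (a b : K) :
    frameAlpha ![0, 1, 1] ![0, 0, 1] ![1, 0, 0] ![1, 1, 0] ![a, 1, b] = a := by
  simp [frameAlpha, bracket_eq]

lemma frameBeta_standard (a b : K) :
    frameBeta ![0, 1, 1] ![0, 0, 1] ![1, 0, 0] ![1, 1, 0] ![a, 1, b] = b := by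
  simp [frameBeta, bracket_eq]

lemma frameAlpha_last (hDAB : bracket D A B ≠ 0) (hDBC : bracket D B C ≠ 0) :
    frameAlpha A B C D D = 1 := by
  rw [frameAlpha, mul_comm, div_self (mul_ne_zero hDBC hDAB)]

lemma frameBeta_last (A B C D : Fin 3 → K) : frameBeta A B C D D = 0 := by
  have hDCD : bracket D C D = 0 := by
    rw [bracket_eq]
    ring
  rw [frameBeta, hDCD, zero_mul, zero_div]

lemma one_sub_frameBeta (hpBC : bracket p B C ≠ 0) (hACD : bracket A C D ≠ 0) :
    1 - frameBeta A B C D p =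
      bracket p A C * bracket B C D / (bracket p B C * bracket A C D) := by
  have hplucker : bracket p B C * bracket A C D - bracket p C D * bracket A B C =
      bracket p A C * bracket B C D := by
    simp only [bracket_eq]
    ring
  rw [frameBeta, ← hplucker, sub_div, div_self (mul_ne_zero hpBC hACD)]

lemma one_sub_frameAlpha_sub_frameBeta (hpBC : bracket p B C ≠ 0) (hDAB : bracket D A B ≠ 0)
    (hACD : bracket A C D ≠ 0) :
    1 - frameAlpha A B C D p - frameBeta A B C D p =
      bracket A B C * bracket D B C / (bracket D A B * bracket A C D) *
        (bracket p A D / bracket p B C) := by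
  rw [frameAlpha, frameBeta]
  field_simp
  simp only [bracket_eq]
  ring

lemma frameAlpha_add_frameBeta_sub (hpBC : bracket p B C ≠ 0) (hqBC : bracket q B C ≠ 0)
    (hDAB : bracket D A B ≠ 0) (hACD : bracket A C D ≠ 0) :
    frameAlpha A B C D q + frameBeta A B C D q - (frameAlpha A B C D p + frameBeta A B C D p) =
      bracket A B C * bracket D B C /
        (bracket D A B * bracket A C D * (bracket p B C * bracket q B C)) *
          bracket (lineMeet B C p q) A D := by
  have hp := one_sub_frameAlpha_sub_frameBeta hpBC hDAB hACD
  have hq := one_sub_frameAlpha_sub_frameBeta hqBC hDAB hACD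
  have hmeet : bracket (lineMeet B C p q) A D =
      bracket p A D * bracket q B C - bracket q A D * bracket p B C := by
    rw [bracket_lineMeet]
    simp only [bracket_eq]
    ring
  calc
    _ = bracket A B C * bracket D B C / (bracket D A B * bracket A C D) *
          (bracket p A D / bracket p B C - bracket q A D / bracket q B C) := by
      linear_combination hp - hq
    _ = _ := by
      rw [div_sub_div _ _ hpBC hqBC, hmeet]
      ring

lemma frameBeta_shift (hDAB : bracket D A B ≠ 0) (hDBC : bracket D B C ≠ 0) :
    frameBeta P A B C p = frameAlpha A B C D P / frameAlpha A B C D p := by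
  unfold frameAlpha frameBeta
  field_simp

lemma frameAlpha_shift (hpAB : bracket p A B ≠ 0) (hpBC : bracket p B C ≠ 0)
    (hPBC : bracket P B C ≠ 0) (hPAC : bracket P A C ≠ 0) (hDAB : bracket D A B ≠ 0)
    (hDBC : bracket D B C ≠ 0) (hACD : bracket A C D ≠ 0) :
    frameAlpha P A B C p =
      (frameAlpha A B C D p - frameAlpha A B C D p * frameBeta A B C D P - frameAlpha A B C D P
          + frameAlpha A B C D P * frameBeta A B C D p) /
        (frameAlpha A B C D p - frameAlpha A B C D p * frameBeta A B C D P) := by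
  have hp := one_sub_frameBeta hpBC hACD
  have hP := one_sub_frameBeta hPBC hACD
  have hBCD : bracket B C D ≠ 0 := by rwa [← bracket_rotate]
  have hden : frameAlpha A B C D p * (1 - frameBeta A B C D P) ≠ 0 := by
    rw [hP, frameAlpha]
    positivity
  have hplucker : bracket p P A * bracket C A B =
      bracket p A B * bracket C P A - bracket P A B * bracket p A C := by
    simp only [bracket_eq]
    ring
  have hshift : frameAlpha P A B C p * (frameAlpha A B C D p * (1 - frameBeta A B C D P)) =
      frameAlpha A B C D p * (1 - frameBeta A B C D P)
        - frameAlpha A B C D P * (1 - frameBeta A B C D p) := by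
    rw [hp, hP]
    unfold frameAlpha
    rw [hplucker, bracket_rotate C P A]
    field_simp
  rw [eq_div_iff (by rwa [mul_one_sub] at hden)]
  linear_combination hshift

end Frame

section FrameSign

variable {K : Type*} [Field K] [LinearOrder K] [IsStrictOrderedRing K] {A B C D p q : Fin 3 → K}

lemma sign_frameAlpha_add_frameBeta_sub (hABC : 0 < bracket A B C) (hDBC : 0 < bracket D B C)
    (hDAB : 0 < bracket D A B) (hACD : 0 < bracket A C D) (hpBC : 0 < bracket p B C)
    (hqBC : 0 < bracket q B C) :
    SignType.sign (frameAlpha A B C D q + frameBeta A B C D q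
        - (frameAlpha A B C D p + frameBeta A B C D p)) =
      SignType.sign (bracket (lineMeet B C p q) A D) := by
  rw [frameAlpha_add_frameBeta_sub hpBC.ne' hqBC.ne' hDAB.ne' hACD.ne', sign_mul,
    sign_pos (by positivity), one_mul]

end FrameSign

section Polygon

/-- Vectors `w k`, for `k` in `ZMod n`, represent the successive vertices of a positively oriented
convex polygon of the projective plane: every vertex lies strictly on the positive side of each
edge not containing it. -/
def IsConvexPolygon {K : Type*} [CommRing K] [LT K] {n : ℕ} (w : ZMod n → Fin 3 → K) : Prop :=
  ∀ k l, k ≠ l → k ≠ l + 1 → 0 < bracket (w k) (w l) (w (l + 1))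

/-- One step of the recursion defining `seqV`, acting on
`((α₁(t), α₂(t), α₃(t)), (β₁(t), β₂(t), β₃(t)))`. -/
def seqStep {K : Type*} [Field K] : (K × K × K) × (K × K × K) → (K × K × K) × (K × K × K)
  | ((α₁, α₂, α₃), (β₁, β₂, β₃)) =>
    (((1 - α₃ - β₃) / (1 - β₃),
      (α₁ - α₁ * β₃ - α₃ + α₃ * β₁) / (α₁ - α₁ * β₃),
      (α₂ - α₂ * β₃ - α₃ + α₃ * β₂) / (α₂ - α₂ * β₃)),
     (α₃, α₃ / α₁, α₃ / α₂))

/-- The coordinates of the last three vertices of a heptagon in the frame of the first four,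
arranged as in `seqV`. -/
def frameCoords {K : Type*} [Field K] (w : ZMod 7 → Fin 3 → K) :
    (K × K × K) × (K × K × K) :=
  ((frameAlpha (w 0) (w 1) (w 2) (w 3) (w 4), frameAlpha (w 0) (w 1) (w 2) (w 3) (w 5),
    frameAlpha (w 0) (w 1) (w 2) (w 3) (w 6)),
   (frameBeta (w 0) (w 1) (w 2) (w 3) (w 4), frameBeta (w 0) (w 1) (w 2) (w 3) (w 5),
    frameBeta (w 0) (w 1) (w 2) (w 3) (w 6)))

section Field

variable {K : Type*} [Field K] {w : ZMod 7 → Fin 3 → K}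

lemma seqStep_frameCoords
    (hw : ∀ k l, k ≠ l → k ≠ l + 1 → bracket (w k) (w l) (w (l + 1)) ≠ 0) :
    seqStep (frameCoords w) = frameCoords fun k => w (k - 1) := by
  have h301 : bracket (w 3) (w 0) (w 1) ≠ 0 := hw 3 0 (by decide) (by decide)
  have h312 : bracket (w 3) (w 1) (w 2) ≠ 0 := hw 3 1 (by decide) (by decide)
  have h023 : bracket (w 0) (w 2) (w 3) ≠ 0 := hw 0 2 (by decide) (by decide)
  have h612 : bracket (w 6) (w 1) (w 2) ≠ 0 := hw 6 1 (by decide) (by decide)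
  have h602 : bracket (w 6) (w 0) (w 2) ≠ 0 := by
    rw [← bracket_rotate]
    exact hw 2 6 (by decide) (by decide)
  have hAlpha (j : ZMod 7) (hj01 : bracket (w j) (w 0) (w 1) ≠ 0)
      (hj12 : bracket (w j) (w 1) (w 2) ≠ 0) :=
    frameAlpha_shift hj01 hj12 h612 h602 h301 h312 h023
  have hBeta (j : ZMod 7) := frameBeta_shift (p := w j) (P := w 6) h301 h312
  -- `w 3` is the vertex leaving the frame; its coordinates `(1, 0)` in the old frame account for
  -- the special shape of the formulas for `α₁` and `β₁`.
  have hAlpha3 := hAlpha 3 h301 h312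
  have hBeta3 := hBeta 3
  rw [frameAlpha_last h301 h312, frameBeta_last] at hAlpha3
  rw [frameAlpha_last h301 h312, div_one] at hBeta3
  have hAlpha4 := hAlpha 4 (hw 4 0 (by decide) (by decide)) (hw 4 1 (by decide) (by decide))
  have hAlpha5 := hAlpha 5 (hw 5 0 (by decide) (by decide)) (hw 5 1 (by decide) (by decide))
  change _ = ((frameAlpha (w 6) (w 0) (w 1) (w 2) (w 3), frameAlpha (w 6) (w 0) (w 1) (w 2) (w 4),
      frameAlpha (w 6) (w 0) (w 1) (w 2) (w 5)),
    (frameBeta (w 6) (w 0) (w 1) (w 2) (w 3), frameBeta (w 6) (w 0) (w 1) (w 2) (w 4),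
      frameBeta (w 6) (w 0) (w 1) (w 2) (w 5)))
  rw [hAlpha3, hAlpha4, hAlpha5, hBeta3, hBeta 4, hBeta 5, frameCoords, seqStep]
  congr 2
  ring

lemma iterate_seqStep_frameCoords
    (hw : ∀ k l, k ≠ l → k ≠ l + 1 → bracket (w k) (w l) (w (l + 1)) ≠ 0) (t : ℕ) :
    seqStep^[t] (frameCoords w) = frameCoords fun k => w (k - t) := by
  induction t with
  | zero => simp
  | succ t ih =>
    rw [Function.iterate_succ_apply', ih, seqStep_frameCoords]
    · simp only [sub_right_comm, Nat.cast_succ, sub_add_eq_sub_sub]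
    · intro k l hkl hkl'
      have h := hw (k - t) (l - t) (by simpa) (by rwa [sub_add_eq_add_sub, Ne, sub_left_inj])
      rwa [sub_add_eq_add_sub] at h

end Field

namespace IsConvexPolygon

lemma comp_add {K : Type*} [CommRing K] [LT K] {n : ℕ} {w : ZMod n → Fin 3 → K}
    (hw : IsConvexPolygon w) (s : ZMod n) : IsConvexPolygon fun k => w (k + s) := by
  intro k l hkl hkl'
  have h := hw (k + s) (l + s) (by simpa) (by rwa [add_right_comm, Ne, add_left_inj])
  rwa [add_right_comm] at h

variable {K : Type*} [Field K] [LinearOrder K] [IsStrictOrderedRing K]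

lemma sign_frameAlpha_add_frameBeta_sub {w : ZMod 7 → Fin 3 → K} (hw : IsConvexPolygon w)
    {i j : ZMod 7} (hi₁ : i ≠ 1) (hi₂ : i ≠ 2) (hj₁ : j ≠ 1) (hj₂ : j ≠ 2) :
    SignType.sign
        (frameAlpha (w 0) (w 1) (w 2) (w 3) (w j) + frameBeta (w 0) (w 1) (w 2) (w 3) (w j)
          - (frameAlpha (w 0) (w 1) (w 2) (w 3) (w i) + frameBeta (w 0) (w 1) (w 2) (w 3) (w i))) =
      SignType.sign (bracket (lineMeet (w 1) (w 2) (w i) (w j)) (w 0) (w 3)) :=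
  _root_.sign_frameAlpha_add_frameBeta_sub (hw 0 1 (by decide) (by decide))
    (hw 3 1 (by decide) (by decide)) (hw 3 0 (by decide) (by decide))
    (hw 0 2 (by decide) (by decide)) (hw i 1 hi₁ hi₂) (hw j 1 hj₁ hj₂)

lemma bracket_lineMeet_pos {w : ZMod 7 → Fin 3 → K} (hw : IsConvexPolygon w)
    (h : 0 ≤ bracket (lineMeet (w 0) (w 1) (w 3) (w 4)) (w 6) (w 2)) :
    0 < bracket (lineMeet (w 0) (w 1) (w 3) (w 4)) (w 5) (w 2) := by
  have h512 : 0 < bracket (w 5) (w 1) (w 2) := hw 5 1 (by decide) (by decide)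
  have h612 : 0 < bracket (w 6) (w 1) (w 2) := hw 6 1 (by decide) (by decide)
  have h256 : 0 < bracket (w 2) (w 5) (w 6) := hw 2 5 (by decide) (by decide)
  have h134 : 0 < bracket (w 1) (w 3) (w 4) := hw 1 3 (by decide) (by decide)
  have h012 : 0 < bracket (w 0) (w 1) (w 2) := hw 0 1 (by decide) (by decide)
  have hY12 : bracket (lineMeet (w 0) (w 1) (w 3) (w 4)) (w 1) (w 2) =
      - (bracket (w 1) (w 3) (w 4) * bracket (w 0) (w 1) (w 2)) := by
    have h112 : bracket (w 1) (w 1) (w 2) = 0 := by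
      rw [bracket_eq]
      ring
    rw [bracket_lineMeet, h112, mul_zero, zero_sub]
  have hplucker := bracket_plucker (lineMeet (w 0) (w 1) (w 3) (w 4)) (w 5) (w 6) (w 2) (w 1)
  rw [hY12, mul_neg, sub_neg_eq_add] at hplucker
  exact pos_of_mul_pos_left (hplucker ▸ by positivity) h612.le

end IsConvexPolygon

end Polygon

section Recursion

variable {a₁ a₂ a₃ b₁ b₂ b₃ : ℝ}

lemma seqV_eq_iterate (t : ℕ) :
    seqV a₁ a₂ a₃ b₁ b₂ b₃ t = seqStep^[t] (seqV a₁ a₂ a₃ b₁ b₂ b₃ 0) := by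
  induction t with
  | zero => rfl
  | succ t ih =>
    rw [Function.iterate_succ_apply', ← ih]
    rfl

lemma seqV_zero :
    seqV a₁ a₂ a₃ b₁ b₂ b₃ 0 = frameCoords fun k => Wrow a₁ a₂ a₃ b₁ b₂ b₃ (k + 1) := by
  have h1 : Wrow a₁ a₂ a₃ b₁ b₂ b₃ (0 + 1) = ![0, 1, 1] := by ext i; fin_cases i <;> rfl
  have h2 : Wrow a₁ a₂ a₃ b₁ b₂ b₃ (1 + 1) = ![0, 0, 1] := by ext i; fin_cases i <;> rfl
  have h3 : Wrow a₁ a₂ a₃ b₁ b₂ b₃ (2 + 1) = ![1, 0, 0] := by ext i; fin_cases i <;> rfl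
  have h4 : Wrow a₁ a₂ a₃ b₁ b₂ b₃ (3 + 1) = ![1, 1, 0] := by ext i; fin_cases i <;> rfl
  have h5 : Wrow a₁ a₂ a₃ b₁ b₂ b₃ (4 + 1) = ![a₁, 1, b₁] := by ext i; fin_cases i <;> rfl
  have h6 : Wrow a₁ a₂ a₃ b₁ b₂ b₃ (5 + 1) = ![a₂, 1, b₂] := by ext i; fin_cases i <;> rfl
  have h7 : Wrow a₁ a₂ a₃ b₁ b₂ b₃ (6 + 1) = ![a₃, 1, b₃] := by ext i; fin_cases i <;> rfl
  rw [frameCoords, h1, h2, h3, h4, h5, h6, h7]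
  simp only [frameAlpha_standard, frameBeta_standard, seqV]

lemma isConvexPolygon_Wrow
    (hpos : ∀ i j : ZMod 7, i ≠ j - 1 → i ≠ j → 0 < Vmat a₁ a₂ a₃ b₁ b₂ b₃ i j) :
    IsConvexPolygon (Wrow a₁ a₂ a₃ b₁ b₂ b₃) := by
  intro k l hkl hkl'
  have h := hpos (k + 1) (l + 2) (by grind) (by grind)
  rw [Vmat, Matrix.of_apply, add_sub_cancel_right, add_sub_cancel_right,
    show l + 2 - 1 = l + 1 by ring] at h
  exact h

lemma seqV_eq_frameCoords (hW : IsConvexPolygon (Wrow a₁ a₂ a₃ b₁ b₂ b₃)) (t : ℕ) :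
    seqV a₁ a₂ a₃ b₁ b₂ b₃ t = frameCoords fun k => Wrow a₁ a₂ a₃ b₁ b₂ b₃ (k + (1 - t)) := by
  rw [seqV_eq_iterate, seqV_zero,
    iterate_seqStep_frameCoords fun k l hkl hkl' => (hW.comp_add 1 k l hkl hkl').ne']
  simp only [sub_add_eq_add_sub, add_sub_assoc]

variable {t : ℕ} {w : ZMod 7 → Fin 3 → ℝ}

lemma alphaV_add_betaV (ht : seqV a₁ a₂ a₃ b₁ b₂ b₃ t = frameCoords w) (χ : Fin 3) :
    alphaV a₁ a₂ a₃ b₁ b₂ b₃ χ t + betaV a₁ a₂ a₃ b₁ b₂ b₃ χ t =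
      frameAlpha (w 0) (w 1) (w 2) (w 3) (w (χ.val + 4))
        + frameBeta (w 0) (w 1) (w 2) (w 3) (w (χ.val + 4)) := by
  rw [alphaV, betaV, ht]
  fin_cases χ <;> rfl

lemma sign_alphaV_add_betaV_sub (ht : seqV a₁ a₂ a₃ b₁ b₂ b₃ t = frameCoords w)
    (hw : IsConvexPolygon w) (χ ψ : Fin 3) :
    SignType.sign (alphaV a₁ a₂ a₃ b₁ b₂ b₃ ψ t + betaV a₁ a₂ a₃ b₁ b₂ b₃ ψ t
        - (alphaV a₁ a₂ a₃ b₁ b₂ b₃ χ t + betaV a₁ a₂ a₃ b₁ b₂ b₃ χ t)) =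
      SignType.sign
        (bracket (lineMeet (w 1) (w 2) (w (χ.val + 4)) (w (ψ.val + 4))) (w 0) (w 3)) := by
  have hne₁ : ∀ χ : Fin 3, (χ.val + 4 : ZMod 7) ≠ 1 := by decide
  have hne₂ : ∀ χ : Fin 3, (χ.val + 4 : ZMod 7) ≠ 2 := by decide
  rw [alphaV_add_betaV ht, alphaV_add_betaV ht]
  exact hw.sign_frameAlpha_add_frameBeta_sub (hne₁ χ) (hne₂ χ) (hne₁ ψ) (hne₂ ψ)

end Recursion

/-- If `V = 𝒱(a₁,a₂,a₃,b₁,b₂,b₃)` has positive entries off the pattern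
`i ∈ {j-1, j}`, and `α₁(2) + β₁(2) ≤ α₂(2) + β₂(2)`, then
`α₂(6) + β₂(6) < α₃(6) + β₃(6)`. -/
theorem seqV_step_ineq (a₁ a₂ a₃ b₁ b₂ b₃ : ℝ)
    (hpos : ∀ i j : ZMod 7, i ≠ j - 1 → i ≠ j → 0 < Vmat a₁ a₂ a₃ b₁ b₂ b₃ i j)
    (h2 : alphaV a₁ a₂ a₃ b₁ b₂ b₃ 0 2 + betaV a₁ a₂ a₃ b₁ b₂ b₃ 0 2 ≤
          alphaV a₁ a₂ a₃ b₁ b₂ b₃ 1 2 + betaV a₁ a₂ a₃ b₁ b₂ b₃ 1 2) :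
    alphaV a₁ a₂ a₃ b₁ b₂ b₃ 1 6 + betaV a₁ a₂ a₃ b₁ b₂ b₃ 1 6 <
    alphaV a₁ a₂ a₃ b₁ b₂ b₃ 2 6 + betaV a₁ a₂ a₃ b₁ b₂ b₃ 2 6 := by
  have hW := isConvexPolygon_Wrow hpos
  set w := Wrow a₁ a₂ a₃ b₁ b₂ b₃
  rw [← sub_nonneg, ← sign_nonneg_iff, sign_alphaV_add_betaV_sub (seqV_eq_frameCoords hW 2)
    (hW.comp_add _), sign_nonneg_iff] at h2
  have hY62 : 0 ≤ bracket (lineMeet (w 0) (w 1) (w 3) (w 4)) (w 6) (w 2) := h2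
  have hY52 : 0 < bracket (lineMeet (w 3) (w 4) (w 0) (w 1)) (w 2) (w 5) := by
    rw [bracket_lineMeet_swap]
    exact hW.bracket_lineMeet_pos hY62
  rw [← sub_pos, ← sign_eq_one_iff, sign_alphaV_add_betaV_sub (seqV_eq_frameCoords hW 6)
    (hW.comp_add _), sign_eq_one_iff]
  exact hY52
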